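/- Let f(z) = z + Σ_{n≥2} a_n zⁿ be analytic on the open unit disc 𝔻 with Re((1−z²)f′(z)) > 0 for all z ∈ 𝔻. Then for every integer k ≥ 1 and every real μ with μ ≥ (2k+1)²/(4k+1), one has |μ a_{2k+1}² − a_{4k+1}| ≤ μ − 1. -/

import Mathlib

open Complex

lemma aux_fps (f : ℂ → ℂ) (a : ℕ → ℂ)
    (hf : ∀ z ∈ Metric.ball (0 : ℂ) 1, HasSum (fun k => a k * z ^ k) (f z)) :
    HasFPowerSeriesOnBall f (FormalMultilinearSeries.ofScalars ℂ a) 0 1 := by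
  refine ⟨?_, by simp, ?_⟩
  · refine ENNReal.le_of_forall_nnreal_lt fun r hr ↦ ?_
    apply FormalMultilinearSeries.le_radius_of_summable
    have := (hf r (by simpa using hr)).summable.norm
    simpa [norm_mul] using this
  · intro y hy
    have := hf y (by simpa [← Metric.eball_ofReal] using hy)
    simpa [FormalMultilinearSeries.ofScalars_apply_eq, mul_comm] using this

lemma aux_deriv (f : ℂ → ℂ) (a : ℕ → ℂ)
    (hf : ∀ z ∈ Metric.ball (0 : ℂ) 1, HasSum (fun k => a k * z ^ k) (f z)) :
    DifferentiableOn ℂ (deriv f) (Metric.ball 0 1) ∧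
    ∀ z ∈ Metric.ball (0 : ℂ) 1, HasSum (fun k : ℕ => ((k:ℂ)+1) * a (k+1) * z ^ k) (deriv f z) := by
  have h1 := aux_fps f a hf
  have hd : DifferentiableOn ℂ f (Metric.ball 0 1) := by
    have := h1.differentiableOn
    simpa [← Metric.eball_ofReal] using this
  have hd' : DifferentiableOn ℂ (deriv f) (Metric.ball 0 1) := hd.deriv Metric.isOpen_ball
  have hc : ∀ n, a n = (n.factorial : ℂ)⁻¹ * iteratedDeriv n f 0 := by
    intro n
    have h2 : HasFPowerSeriesAt f (FormalMultilinearSeries.ofScalars ℂ (fun n => (n.factorial : ℂ)⁻¹ * iteratedDeriv n f 0)) 0 := by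
      refine (aux_fps f _ ?_).hasFPowerSeriesAt
      intro z hz
      have := Complex.hasSum_taylorSeries_on_ball (r := 1) (c := 0) (by simpa using hd) (by simpa using hz)
      simpa [mul_assoc, mul_comm, mul_left_comm] using this
    have := h1.hasFPowerSeriesAt.eq_formalMultilinearSeries h2
    exact congrFun (FormalMultilinearSeries.ofScalars_series_injective ℂ ℂ this) n
  refine ⟨hd', fun z hz => ?_⟩
  have := Complex.hasSum_taylorSeries_on_ball (r := 1) (c := 0) (by simpa using hd') (by simpa using hz)
  convert! this using 1
  funext n
  rw [hc (n+1), iteratedDeriv_succ', Nat.factorial_succ]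
  have : ((n:ℂ)+1) ≠ 0 := by exact_mod_cast Nat.succ_ne_zero n
  have : (n.factorial:ℂ) ≠ 0 := by exact_mod_cast Nat.factorial_ne_zero n
  simp
  field_simp

/-- coefficients of `(1-z^2) f'` -/
lemma aux_mul (g : ℂ → ℂ) (F : ℕ → ℂ) (z : ℂ)
    (hF : HasSum (fun k => F k * z ^ k) (g z)) :
    HasSum (fun k => (F k - if 2 ≤ k then F (k-2) else 0) * z ^ k) ((1 - z^2) * g z) := by
  have h2 : HasSum (fun k => (if 2 ≤ k then F (k-2) else 0) * z ^ k) (z^2 * g z) := by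
    rw [← hasSum_nat_add_iff' 2]
    simp only [Finset.sum_range_succ, Finset.sum_range_zero]
    convert! hF.mul_left (z^2) using 1
    · funext n; simp; ring
    · simp
  convert! hF.sub h2 using 1
  · funext n; ring
  · ring

lemma aux_exp (m : ℤ) : ∫ θ in (0:ℝ)..(2*Real.pi), cexp (m * I * θ) = if m = 0 then 2 * Real.pi else 0 := by
  split_ifs with h
  · subst h; simp
  · rw [integral_exp_mul_complex (by simp [h])]
    have : cexp (m * I * ((2*Real.pi : ℝ):ℂ)) = 1 := by
      rw [← Complex.exp_int_mul_two_pi_mul_I m]; congr 1; push_cast; ring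
    rw [this]; simp

lemma aux_int (g : ℂ → ℂ) (P : ℕ → ℂ)
    (hP : ∀ z ∈ Metric.ball (0 : ℂ) 1, HasSum (fun k => P k * z ^ k) (g z))
    (r : ℝ) (hr0 : 0 ≤ r) (hr : r < 1) (m : ℤ) :
    HasSum (fun j : ℕ => P j * r ^ j * if (j:ℤ) + m = 0 then 2 * (Real.pi:ℂ) else 0)
      (∫ θ in (0:ℝ)..(2*Real.pi), g (r * cexp (I * θ)) * cexp (m * I * θ)) := by
  have hn : ∀ θ : ℝ, ‖cexp (I * θ)‖ = 1 := fun θ => by rw [mul_comm]; exact Complex.norm_exp_ofReal_mul_I θ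
  have hn' : ∀ θ : ℝ, ‖cexp (m * I * θ)‖ = 1 := fun θ => by
    have := Complex.norm_exp_ofReal_mul_I (m*θ)
    rw [← this]; congr 2; push_cast; ring
  have key := intervalIntegral.hasSum_integral_of_dominated_convergence (μ := MeasureTheory.volume)
    (a := 0) (b := 2*Real.pi)
    (F := fun (j:ℕ) (θ:ℝ) => P j * (r * cexp (I * θ))^j * cexp (m * I * θ))
    (f := fun θ => g (r * cexp (I * θ)) * cexp (m * I * θ))
    (fun j _ => ‖P j * r^j‖) (fun j => (by fun_prop : Continuous _).aestronglyMeasurable)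
    (fun j => Filter.Eventually.of_forall fun θ _ => by simp [hn, hn'])
    (Filter.Eventually.of_forall fun θ _ => by
      have := (hP r (by simpa [abs_of_nonneg hr0] using hr)).summable.norm
      simpa using this)
    (by simp)
    (Filter.Eventually.of_forall fun θ _ => by
      refine HasSum.mul_right _ (hP _ ?_)
      simpa [hn, abs_of_nonneg hr0] using hr)
  convert! key using 1
  funext j
  have : ∀ θ : ℝ, P j * (r * cexp (I * θ))^j * cexp (m * I * θ) = P j * r^j * cexp (((j + m : ℤ):ℂ) * I * θ) := by
    intro θ
    rw [mul_pow, ← Complex.exp_nat_mul, mul_assoc, mul_assoc, mul_assoc, mul_assoc, ← Complex.exp_add]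
    congr 3; push_cast; ring
  simp_rw [this]
  rw [intervalIntegral.integral_const_mul, aux_exp]
  split_ifs <;> simp

lemma aux_lin (h : ℝ → ℝ) (hc : Continuous h) (h0 : ∀ θ, 0 ≤ h θ) (c : ℕ → ℂ)
    (h1 : ∫ θ in (0:ℝ)..(2*Real.pi), h θ = 2 * Real.pi)
    (hn : ∀ n : ℕ, 1 ≤ n → ∫ θ in (0:ℝ)..(2*Real.pi), (h θ : ℂ) * cexp (((-n : ℤ) : ℂ) * I * θ)
      = 2 * Real.pi * c n) :
    (∀ n, 1 ≤ n → ‖c n‖ ≤ 1) ∧ ∀ n m, 1 ≤ n → 1 ≤ m → ‖c (n+m) - 2 * c n * c m‖ ≤ 1 := by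
  have hpi := Real.pi_pos
  have hE : ∀ (n : ℕ) (θ : ℝ), ‖cexp (((-n : ℤ) : ℂ) * I * θ)‖ = 1 := fun n θ => by
    have := Complex.norm_exp_ofReal_mul_I (((-n : ℤ) : ℝ)*θ)
    rw [← this]; congr 2; push_cast; ring
  have h2pi : ∀ z : ℂ, ‖2 * (Real.pi:ℂ) * z‖ = 2 * Real.pi * ‖z‖ := by
    intro z; simp [abs_of_pos hpi]
  constructor
  · intro n hn1
    have h3 := intervalIntegral.norm_integral_le_integral_norm (μ := MeasureTheory.volume) (a := 0) (b := 2*Real.pi)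
      (f := fun θ : ℝ => (h θ : ℂ) * cexp (((-n : ℤ) : ℂ) * I * θ)) (by positivity)
    simp only [norm_mul, hE, mul_one, Complex.norm_real, Real.norm_eq_abs, abs_of_nonneg (h0 _)] at h3
    rw [hn n hn1, h1, h2pi] at h3
    nlinarith
  · intro n m hn1 hm1
    have i1 : ∫ θ in (0:ℝ)..(2*Real.pi), ((h θ : ℂ) * cexp (((-n : ℤ) : ℂ) * I * θ) * (cexp (((-m : ℤ) : ℂ) * I * θ) - 2 * c m))
        = 2 * Real.pi * (c (n+m) - 2 * c n * c m) := by
      have : ∀ θ : ℝ, ((h θ : ℂ) * cexp (((-n : ℤ) : ℂ) * I * θ) * (cexp (((-m : ℤ) : ℂ) * I * θ) - 2 * c m))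
          = (h θ : ℂ) * cexp (((-(n+m : ℕ) : ℤ) : ℂ) * I * θ) - (2 * c m) * ((h θ : ℂ) * cexp (((-n : ℤ) : ℂ) * I * θ)) := by
        intro θ
        have : cexp (((-(n+m : ℕ) : ℤ) : ℂ) * I * θ) = cexp (((-n : ℤ) : ℂ) * I * θ) * cexp (((-m : ℤ) : ℂ) * I * θ) := by
          rw [← Complex.exp_add]; congr 1; push_cast; ring
        rw [this]; ring
      simp_rw [this]
      rw [intervalIntegral.integral_sub, intervalIntegral.integral_const_mul, hn n hn1, hn (n+m) (by omega)]
      · ring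
      · exact (by fun_prop : Continuous _).intervalIntegrable _ _
      · exact (by fun_prop : Continuous _).intervalIntegrable _ _
    have h3 := intervalIntegral.norm_integral_le_integral_norm (μ := MeasureTheory.volume) (a := 0) (b := 2*Real.pi)
      (f := fun θ : ℝ => ((h θ : ℂ) * cexp (((-n : ℤ) : ℂ) * I * θ) * (cexp (((-m : ℤ) : ℂ) * I * θ) - 2 * c m))) (by positivity)
    rw [i1, h2pi] at h3
    simp only [norm_mul, hE, mul_one, Complex.norm_real, Real.norm_eq_abs, abs_of_nonneg (h0 _)] at h3
    have i2 : ∫ θ in (0:ℝ)..(2*Real.pi), ((1 + 2 * ‖c m‖^2) * h θ - 2 * ((starRingEnd ℂ (c m)) * ((h θ : ℂ) * cexp (((-m : ℤ) : ℂ) * I * θ))).re) = 2 * Real.pi := by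
      rw [intervalIntegral.integral_sub, intervalIntegral.integral_const_mul, intervalIntegral.integral_const_mul, h1]
      · have := Complex.reCLM.intervalIntegral_comp_comm (μ := MeasureTheory.volume) (a := 0) (b := 2*Real.pi)
          (f := fun θ : ℝ => (starRingEnd ℂ (c m)) * ((h θ : ℂ) * cexp (((-m : ℤ) : ℂ) * I * θ)))
          ((by fun_prop : Continuous _).intervalIntegrable _ _)
        simp only [Complex.reCLM_apply] at this
        rw [this, intervalIntegral.integral_const_mul, hn m hm1]
        have e : (starRingEnd ℂ (c m)) * (2 * Real.pi * c m) = ((2 * Real.pi * ‖c m‖^2 : ℝ) : ℂ) := by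
          have := Complex.conj_mul' (c m)
          push_cast
          linear_combination (2 * (Real.pi:ℂ)) * this
        rw [e, Complex.ofReal_re]; ring
      · exact (by fun_prop : Continuous _).intervalIntegrable _ _
      · exact (by fun_prop : Continuous _).intervalIntegrable _ _
    have h4 : ∫ θ in (0:ℝ)..(2*Real.pi), h θ * ‖cexp (((-m : ℤ) : ℂ) * I * θ) - 2 * c m‖ ≤ 2 * Real.pi := by
      refine le_of_le_of_eq ?_ i2
      apply intervalIntegral.integral_mono_on (by positivity)
      · exact (by fun_prop : Continuous _).intervalIntegrable _ _
      · exact (by fun_prop : Continuous _).intervalIntegrable _ _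
      · intro θ _
        have e1 := hE m θ
        generalize cexp (((-m : ℤ) : ℂ) * I * θ) = e at *
        have e2 : ‖e - 2 * c m‖^2 = 1 + 4 * ‖c m‖^2 - 4 * (starRingEnd ℂ (c m) * e).re := by
          have e3 : ‖e‖^2 = 1 := by rw [e1]; norm_num
          rw [Complex.sq_norm, Complex.normSq_apply] at *
          simp
          rw [Complex.sq_norm, Complex.normSq_apply]
          nlinarith
        have e3 : (starRingEnd ℂ (c m) * (h θ * e)).re = h θ * (starRingEnd ℂ (c m) * e).re := by
          rw [← Complex.re_ofReal_mul]; congr 1; ring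
        rw [e3]
        have := h0 θ
        nlinarith [mul_nonneg this (sq_nonneg (‖e - 2 * c m‖ - 1))]
    nlinarith

lemma aux_cara_r (g : ℂ → ℂ) (P : ℕ → ℂ) (hgc : ContinuousOn g (Metric.ball 0 1))
    (hP : ∀ z ∈ Metric.ball (0 : ℂ) 1, HasSum (fun k => P k * z ^ k) (g z)) (hP0 : P 0 = 1)
    (hre : ∀ z ∈ Metric.ball (0 : ℂ) 1, 0 < (g z).re)
    (r : ℝ) (hr0 : 0 ≤ r) (hr : r < 1) :
    (∀ n, 1 ≤ n → ‖P n * r ^ n / 2‖ ≤ 1) ∧ ∀ n m, 1 ≤ n → 1 ≤ m →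
      ‖P (n+m) * r^(n+m) / 2 - 2 * (P n * r^n / 2) * (P m * r^m / 2)‖ ≤ 1 := by
  have hn : ∀ θ : ℝ, ‖cexp (I * θ)‖ = 1 := fun θ => by rw [mul_comm]; exact Complex.norm_exp_ofReal_mul_I θ
  have hmem : ∀ θ : ℝ, r * cexp (I * θ) ∈ Metric.ball (0:ℂ) 1 := fun θ => by
    simpa [hn, abs_of_nonneg hr0] using hr
  have hG : Continuous (fun θ : ℝ => g (r * cexp (I * θ))) :=
    hgc.comp_continuous (by fun_prop) hmem
  have hneg : ∀ n : ℕ, ∫ θ in (0:ℝ)..(2*Real.pi), g (r * cexp (I * θ)) * cexp (((-n : ℤ) : ℂ) * I * θ) = 2 * Real.pi * (P n * r^n) := by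
    intro n
    refine (aux_int g P hP r hr0 hr (-n)).unique ?_
    have := hasSum_single (f := fun j : ℕ => P j * r ^ j * if (j:ℤ) + (-n) = 0 then 2 * (Real.pi:ℂ) else 0) n
      (fun j hj => by rw [if_neg (by omega)]; simp)
    simpa [mul_comm] using this
  have hpos : ∀ n : ℕ, 1 ≤ n → ∫ θ in (0:ℝ)..(2*Real.pi), g (r * cexp (I * θ)) * cexp (((n : ℤ) : ℂ) * I * θ) = 0 := by
    intro n hn1
    refine (aux_int g P hP r hr0 hr n).unique ?_
    convert! hasSum_zero using 1
    funext j
    rw [if_neg (by omega)]; simp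
  have hGre : Continuous (fun θ : ℝ => (g (r * cexp (I * θ))).re) := Complex.continuous_re.comp hG
  refine aux_lin (fun θ => (g (r * cexp (I * θ))).re) hGre (fun θ => (hre _ (hmem θ)).le) (fun n => P n * r^n/2) ?_ ?_
  · have := Complex.reCLM.intervalIntegral_comp_comm (μ := MeasureTheory.volume) (a := 0) (b := 2*Real.pi)
          (f := fun θ : ℝ => g (r * cexp (I * θ))) (hG.intervalIntegrable _ _)
    simp only [Complex.reCLM_apply] at this
    rw [this]
    have h0 := hneg 0
    simp [hP0] at h0
    rw [h0]; simp
  · intro n hn1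
    have e : ∀ θ : ℝ, (((g (r * cexp (I * θ))).re : ℝ) : ℂ) * cexp (((-n : ℤ) : ℂ) * I * θ)
       = (1/2) * (g (r * cexp (I * θ)) * cexp (((-n : ℤ) : ℂ) * I * θ))
         + (1/2) * (starRingEnd ℂ) (g (r * cexp (I * θ)) * cexp (((n : ℤ) : ℂ) * I * θ)) := by
      intro θ
      have e1 : (starRingEnd ℂ) (cexp (((n : ℤ) : ℂ) * I * θ)) = cexp (((-n : ℤ) : ℂ) * I * θ) := by
        rw [← Complex.exp_conj]; congr 1; simp
      rw [map_mul, e1, Complex.re_eq_add_conj]; ring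
    simp_rw [e]
    have e2 : ∫ θ in (0:ℝ)..(2*Real.pi), (starRingEnd ℂ) (g (r * cexp (I * θ)) * cexp (((n : ℤ) : ℂ) * I * θ)) = 0 := by
      have := Complex.conjCLE.toContinuousLinearMap.intervalIntegral_comp_comm (μ := MeasureTheory.volume) (a := 0) (b := 2*Real.pi)
          (f := fun θ : ℝ => g (r * cexp (I * θ)) * cexp (((n : ℤ) : ℂ) * I * θ)) ((hG.mul (by fun_prop)).intervalIntegrable _ _)
      rw [hpos n hn1, map_zero] at this
      exact this
    rw [intervalIntegral.integral_add, intervalIntegral.integral_const_mul, intervalIntegral.integral_const_mul, e2, hneg n]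
    · ring
    · exact (continuous_const.mul (hG.mul (by fun_prop))).intervalIntegrable _ _
    · refine Continuous.intervalIntegrable ?_ _ _
      exact continuous_const.mul (Complex.continuous_conj.comp (hG.mul (by fun_prop)))

lemma aux_cara (g : ℂ → ℂ) (P : ℕ → ℂ) (hgc : ContinuousOn g (Metric.ball 0 1))
    (hP : ∀ z ∈ Metric.ball (0 : ℂ) 1, HasSum (fun k => P k * z ^ k) (g z)) (hP0 : P 0 = 1)
    (hre : ∀ z ∈ Metric.ball (0 : ℂ) 1, 0 < (g z).re) :
    (∀ n, 1 ≤ n → ‖P n / 2‖ ≤ 1) ∧ ∀ n m, 1 ≤ n → 1 ≤ m →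
      ‖P (n+m) / 2 - 2 * (P n / 2) * (P m / 2)‖ ≤ 1 := by
  have gen : ∀ F : ℝ → ℂ, Continuous F → (∀ r, 0 ≤ r → r < 1 → ‖F r‖ ≤ 1) → ‖F 1‖ ≤ 1 := by
    intro F hF hb
    refine le_of_tendsto (f := fun r => ‖F r‖) (x := nhdsWithin 1 (Set.Iio (1:ℝ)))
      ((hF.norm.tendsto 1).mono_left nhdsWithin_le_nhds) ?_
    filter_upwards [Ioo_mem_nhdsLT (show (0:ℝ) < 1 by norm_num)] with r hr
    exact hb r hr.1.le hr.2
  constructor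
  · intro n hn
    simpa using gen (fun r => P n * r ^ n / 2) (by fun_prop)
      (fun r h0 h1 => (aux_cara_r g P hgc hP hP0 hre r h0 h1).1 n hn)
  · intro n m hn hm
    simpa using gen (fun r => P (n+m) * r^(n+m) / 2 - 2 * (P n * r^n / 2) * (P m * r^m / 2)) (by fun_prop)
      (fun r h0 h1 => (aux_cara_r g P hgc hP hP0 hre r h0 h1).2 n m hn hm)

lemma aux_sum (c : ℕ → ℂ) (k : ℕ) :
    ∑ i ∈ Finset.range k, ∑ j ∈ Finset.range k, c (i+1+(j+1)) =
     ∑ i ∈ Finset.range k, (i : ℂ) * c (i + 1) + ∑ i ∈ Finset.range k, ((k:ℂ) - i) * c (k + 1 + i) := by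
  induction k with
  | zero => simp
  | succ k ih =>
    have hs : ∀ k, ∑ i ∈ Finset.range k, c (i+1+(k+1)) = ∑ i ∈ Finset.range k, c (k + 1 + (i+1)) := fun k =>
      Finset.sum_congr rfl fun i _ => by rw [add_comm]
    simp only [Finset.sum_range_succ (n := k), Finset.sum_add_distrib]
    rw [ih, hs]
    have e1 : ∑ x ∈ Finset.range k, (((k + 1 : ℕ) : ℂ) - x) * c (k + 1 + 1 + x)
      = ∑ x ∈ Finset.range k, ((k:ℂ) - x) * c (k + 1 + (x+1)) + ∑ x ∈ Finset.range k, c (k + 1 + (x+1)) := by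
      rw [← Finset.sum_add_distrib]
      refine Finset.sum_congr rfl fun x _ => ?_
      rw [show k + 1 + 1 + x = k + 1 + (x+1) by ring]; push_cast; ring
    have e2 : ∑ x ∈ Finset.range k, ((k:ℂ) - x) * c (k + 1 + (x+1)) =
       ∑ x ∈ Finset.range k, ((k:ℂ) - x) * c (k + 1 + x) - k * c (k+1) + ∑ x ∈ Finset.range k, c (k+1+(x+1)) := by
      have := Finset.sum_range_succ' (fun x : ℕ => ((k:ℂ) + 1 - x) * c (k+1+x)) k
      have t := Finset.sum_range_succ (fun x : ℕ => ((k:ℂ) + 1 - x) * c (k+1+x)) k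
      have u := Finset.sum_range_succ (fun x : ℕ => c (k+1+x)) k
      have u' := Finset.sum_range_succ' (fun x : ℕ => c (k+1+x)) k
      have v : ∑ x ∈ Finset.range k, ((k:ℂ) + 1 - x) * c (k+1+x) = ∑ x ∈ Finset.range k, ((k:ℂ) - x) * c (k+1+x) + ∑ x ∈ Finset.range k, c (k+1+x) := by
        rw [← Finset.sum_add_distrib]; exact Finset.sum_congr rfl fun x _ => by ring
      push_cast at this
      simp only [add_sub_add_right_eq_sub] at this
      simp at this t u u'
      linear_combination -this + t + v - u + u'
    rw [e1, e2]
    rw [show k + 1 + (k+1) = k + 1 + 1 + k by ring]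
    push_cast
    ring_nf

lemma aux_final (c : ℕ → ℂ) (h1 : ∀ n, 1 ≤ n → ‖c n‖ ≤ 1)
    (h2 : ∀ n m, 1 ≤ n → 1 ≤ m → ‖c (n+m) - 2 * c n * c m‖ ≤ 1) (k : ℕ) (S : ℕ → ℂ)
    (hS : ∀ k, S k = 1 + 2 * ∑ i ∈ Finset.range k, c (i+1)) :
    ‖S k‖ ≤ 2 * k + 1 ∧ ‖S k ^ 2 - S (2 * k)‖ ≤ 4 * (k:ℝ)^2 := by
  constructor
  · rw [hS]
    have : ‖∑ i ∈ Finset.range k, c (i+1)‖ ≤ ∑ i ∈ Finset.range k, (1:ℝ) :=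
      norm_sum_le_of_le _ fun i _ => h1 _ (by omega)
    simp at this
    refine (norm_add_le _ _).trans ?_
    simp
    linarith
  · have id1 : S k ^ 2 - S (2 * k) = -(2 * ∑ i ∈ Finset.range k, ∑ j ∈ Finset.range k, (c (i+1+(j+1)) - 2 * c (i+1) * c (j+1)))
        + 2 * ∑ i ∈ Finset.range k, (((i + 1 : ℝ) : ℂ) * c (i+1) + (((k:ℝ) - i - 1 : ℝ) : ℂ) * c (k+1+i)) := by
      have e := aux_sum c k
      have e2 : (∑ i ∈ Finset.range k, c (i+1))^2 = ∑ i ∈ Finset.range k, ∑ j ∈ Finset.range k, c (i+1) * c (j+1) := by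
        rw [sq, Finset.sum_mul_sum]
      have e3 : ∑ i ∈ Finset.range (2*k), c (i+1) = ∑ i ∈ Finset.range k, c (i+1) + ∑ i ∈ Finset.range k, c (k+1+i) := by
        rw [two_mul, Finset.sum_range_add]
        congr 1
        exact Finset.sum_congr rfl fun i _ => by congr 1; ring
      rw [hS, hS, e3]
      simp only [Finset.sum_sub_distrib, mul_assoc, ← Finset.mul_sum]
      rw [e]
      push_cast
      simp only [add_mul, sub_mul, Finset.sum_add_distrib, Finset.sum_sub_distrib, one_mul]
      simp only [Finset.mul_sum] at e2 ⊢
      simp only [← Finset.mul_sum] at e2 ⊢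
      linear_combination 4 * e2
    have b1 : ‖∑ i ∈ Finset.range k, ∑ j ∈ Finset.range k, (c (i+1+(j+1)) - 2 * c (i+1) * c (j+1))‖ ≤ ∑ i ∈ Finset.range k, ∑ j ∈ Finset.range k, (1:ℝ) :=
      norm_sum_le_of_le _ fun i _ => norm_sum_le_of_le _ fun j _ => h2 _ _ (by omega) (by omega)
    have b2 : ‖∑ i ∈ Finset.range k, (((i + 1 : ℝ) : ℂ) * c (i+1) + (((k:ℝ) - i - 1 : ℝ) : ℂ) * c (k+1+i))‖ ≤ ∑ i ∈ Finset.range k, (k:ℝ) := by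
      refine norm_sum_le_of_le _ fun i hi => ?_
      have hi' : (i:ℝ) + 1 ≤ k := by exact_mod_cast Finset.mem_range.mp hi
      refine (norm_add_le _ _).trans ?_
      rw [norm_mul, norm_mul, Complex.norm_real, Complex.norm_real, Real.norm_of_nonneg (by positivity), Real.norm_of_nonneg (by linarith)]
      have := h1 (i+1) (by omega)
      have := h1 (k+1+i) (by omega)
      have p : (0:ℝ) ≤ i + 1 := by positivity
      have q : (0:ℝ) ≤ k - i - 1 := by linarith
      nlinarith
    simp only [Finset.sum_const, Finset.card_range, nsmul_eq_mul, mul_one] at b1 b2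
    rw [id1]
    refine (norm_add_le _ _).trans ?_
    rw [norm_neg, norm_mul, norm_mul]
    simp only [Complex.norm_ofNat]
    nlinarith

theorem zalcman_F2_zero_diagonal
    (f : ℂ → ℂ) (a : ℕ → ℂ)
    (ha0 : a 0 = 0) (ha1 : a 1 = 1)
    (hf : ∀ z ∈ Metric.ball (0 : ℂ) 1, HasSum (fun k => a k * z ^ k) (f z))
    (hre : ∀ z ∈ Metric.ball (0 : ℂ) 1, 0 < ((1 - z ^ 2) * deriv f z).re)
    (k : ℕ) (hk : 1 ≤ k) (μ : ℝ)
    (hμ : (2 * (k : ℝ) + 1) ^ 2 / (4 * (k : ℝ) + 1) ≤ μ) :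
    ‖(μ : ℂ) * a (2 * k + 1) ^ 2 - a (4 * k + 1)‖ ≤ μ - 1 := by
  obtain ⟨hd, hs⟩ := aux_deriv f a hf
  set F : ℕ → ℂ := fun n => ((n:ℂ)+1) * a (n+1) with hF
  set P : ℕ → ℂ := fun k => F k - if 2 ≤ k then F (k-2) else 0 with hP
  have hF0 : F 0 = 1 := by simp [hF, ha1]
  have hP0 : P 0 = 1 := by simp [hP, hF0]
  have hPs : ∀ z ∈ Metric.ball (0 : ℂ) 1, HasSum (fun k => P k * z ^ k) ((1 - z^2) * deriv f z) :=
    fun z hz => aux_mul (deriv f) F z (hs z hz)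
  have hcont : ContinuousOn (fun z => (1 - z^2) * deriv f z) (Metric.ball 0 1) :=
    (by fun_prop : Continuous fun z : ℂ => 1 - z^2).continuousOn.mul hd.continuousOn
  obtain ⟨c1, c2⟩ := aux_cara (fun z => (1 - z^2) * deriv f z) P hcont hPs hP0 hre
  have hS : ∀ k, F (2*k) = 1 + 2 * ∑ i ∈ Finset.range k, P (2*(i+1)) / 2 := by
    intro k
    induction k with
    | zero => simp [hF0]
    | succ k ih =>
      rw [Finset.sum_range_succ]
      have : P (2*(k+1)) = F (2*(k+1)) - F (2*k) := by
        simp only [hP]; rw [if_pos (by omega)]; congr 2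
      rw [this]; linear_combination ih
  obtain ⟨s1, s2⟩ := aux_final (fun j => P (2*j) / 2) (fun n hn => c1 _ (by omega))
    (fun n m hn hm => by
      have := c2 (2*n) (2*m) (by omega) (by omega)
      rwa [← mul_add] at this) k (fun k => F (2*k)) hS
  have f1 : F (2*k) = ((2 * (k:ℝ) + 1 : ℝ) : ℂ) * a (2*k+1) := by simp [hF]
  have f2 : F (2*(2*k)) = ((4 * (k:ℝ) + 1 : ℝ) : ℂ) * a (4*k+1) := by
    simp only [hF]; rw [show 2*(2*k) = 4*k by ring]; push_cast; ring
  simp only [f1, f2] at s1 s2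
  set A := a (2*k+1)
  set B := a (4*k+1)
  set x : ℝ := 2 * (k:ℝ) + 1 with hx
  set y : ℝ := 4 * (k:ℝ) + 1 with hy
  have hx0 : 0 < x := by positivity
  have hy0 : 0 < y := by positivity
  have hA : ‖A‖ ≤ 1 := by
    rw [norm_mul, Complex.norm_real, Real.norm_of_nonneg hx0.le] at s1
    nlinarith
  have hyC : (y:ℂ) ≠ 0 := by exact_mod_cast hy0.ne'
  have id : (μ:ℂ) * A^2 - B = ((μ - x^2/y : ℝ) : ℂ) * A^2 + ((1/y : ℝ):ℂ) * (((x:ℂ) * A)^2 - y * B) := by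
    push_cast; field_simp; ring
  rw [id]
  refine (norm_add_le _ _).trans ?_
  rw [norm_mul, norm_mul, norm_pow, Complex.norm_real, Complex.norm_real, Real.norm_of_nonneg (by linarith), Real.norm_of_nonneg (by positivity)]
  have hA2 : ‖A‖^2 ≤ 1 := pow_le_one₀ (norm_nonneg _) hA
  have t1 : (μ - x^2/y) * ‖A‖^2 ≤ μ - x^2/y := by
    have : 0 ≤ μ - x^2/y := by linarith
    nlinarith
  have t2 : 1/y * ‖((x:ℂ) * A)^2 - y * B‖ ≤ 1/y * (4 * (k:ℝ)^2) :=
    mul_le_mul_of_nonneg_left s2 (by positivity)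
  have t3 : 1/y * (4 * (k:ℝ)^2) = x^2/y - 1 := by
    field_simp; rw [hx, hy]; ring
  linarith
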